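/- Let n ≥ 2, d ≥ 1, L ≥ 0 be integers with 2L ≤ d, let S ⊆ [n]^∞ be a d-maximal set containing no (L+1)-ball, and let ℓ ≥ 0. Let a, b ∈ S satisfy dist(a,b) = d, and assume (after reordering coordinates) that a and b differ exactly in the first d coordinates. For a word z, let z_{≤d} ∈ [n]^d denote its prefix of length d. For p ∈ [n]^d define S^{(ℓ)}(p) = {z ∈ S^{(ℓ)} : z_{≤d} = p} and m(p) = max(dist(a_{≤d}, p), dist(b_{≤d}, p)), and set Z = Sun(d+n, 2L). Then |S^{(ℓ)}(p)| ≤ d·Z·(n/2)^{d−m(p)}·binom(2d−m(p), d−m(p)) (as real numbers, with Sun(p,0) interpreted as 1). -/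

import Mathlib

/-- Hamming distance between infinite words over `Fin n`, as an extended natural number. -/
noncomputable def hDist (n : ℕ) (a b : ℕ → Fin n) : ℕ∞ := {i | a i ≠ b i}.encard

/-- The `r`-ball around `a`. -/
def hBall (n : ℕ) (a : ℕ → Fin n) (r : ℕ) : Set (ℕ → Fin n) := {x | hDist n x a ≤ (r : ℕ∞)}

/-- `S` is `d`-maximal: it has diameter `d` and any point within distance `d`
of all of `S` already belongs to `S`. -/
def IsDMaximal (n d : ℕ) (S : Set (ℕ → Fin n)) : Prop :=
  (∀ a ∈ S, ∀ b ∈ S, hDist n a b ≤ (d : ℕ∞)) ∧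
  (∃ a ∈ S, ∃ b ∈ S, hDist n a b = (d : ℕ∞)) ∧
  (∀ x : ℕ → Fin n, (∀ s ∈ S, hDist n x s ≤ (d : ℕ∞)) → x ∈ S)

/-- `S` contains an `r`-ball. -/
def ContainsBall (n : ℕ) (S : Set (ℕ → Fin n)) (r : ℕ) : Prop :=
  ∃ a, hBall n a r ⊆ S

/-- `S^(ℓ)`: centers of `ℓ`-balls contained in `S` that are not contained in any
`(ℓ+1)`-ball inside `S`. -/
def Sell (n : ℕ) (S : Set (ℕ → Fin n)) (ℓ : ℕ) : Set (ℕ → Fin n) :=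
  {a ∈ S | hBall n a ℓ ⊆ S ∧
    ¬ ∃ b, hBall n a ℓ ⊆ hBall n b (ℓ + 1) ∧ hBall n b (ℓ + 1) ⊆ S}

/-- A word `a` fits the template `t` (entries `none` are wildcards). -/
def Fits (n : ℕ) (a : ℕ → Fin n) (t : ℕ → Option (Fin n)) : Prop :=
  ∀ i x, t i = some x → a i = x

/-- A template is regular with respect to `w` if it never fixes the letter of `w`. -/
def RegularWrt (n : ℕ) (w : ℕ → Fin n) (t : ℕ → Option (Fin n)) : Prop :=
  ∀ i, t i ≠ some (w i)

/-- A family of `p` sets forming a sunflower: `p` distinct sets whose pairwise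
intersections are all equal. -/
def IsSunflowerFam (p : ℕ) (F : Finset (Finset ℕ)) : Prop :=
  F.card = p ∧ ∃ C : Finset ℕ, ∀ A ∈ F, ∀ B ∈ F, A ≠ B → A ∩ B = C

/-- `Sun p k`: the least `N` such that every family of more than `N` distinct
`k`-element sets contains a `p`-sunflower. -/
noncomputable def Sun (p k : ℕ) : ℕ :=
  sInf {N : ℕ | ∀ F : Finset (Finset ℕ), (∀ A ∈ F, A.card = k) → N < F.card →
    ∃ G ⊆ F, IsSunflowerFam p G}

/-!
Let `T` be the set of coordinates from `d` on. Every `s ∈ S` is within `d` of both `a` and `b`,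
which agree on `T` and disagree everywhere else; hence `s` differs from `a` in at most `d / 2`
coordinates of `T`, and in at most `d - m(p)` of them if `s` has prefix `p`. It remains to count,
for each `r` and each centre `c`, the words of `S^(ℓ)` at distance `r` from `c` that change `c` only
at coordinates of `T` where `c` agrees with `a`.

For `r ≤ 2L`, averaging over a random word `x` reduces to words whose changes all follow `x`. If
there are too many of them, the sets of changed coordinates contain a sunflower with more than
`d / 2` petals. Once the letters of `x` have been written on its core, the changes are pairwise
disjoint, so each `s ∈ S` agrees with `a` throughout the changes of some word of the sunflower. This
puts a ball around the new centre inside `S` which properly extends the `ℓ`-balls around the words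
of the sunflower, against the definition of `S^(ℓ)`.

For larger `r`, induct on `r`. Since `S` contains no `(L + 1)`-ball, some `s ∈ S` has distance at
least `d - L` from `c`, so words of `S` at distance `r` from `c` must move towards `s`: counted with
weight two where they take the letter of `s`, at least `r - L` of their changes happen among the at
most `d / 2` coordinates of `T` where `s` differs from `a`. Fixing one such change leaves words at
distance `r - 1` from a new centre, and double counting bounds the number of words by
`(n / 2) * d / (r - L)` times the bound for `r - 1`.
-/

open scoped Finset

section Sunflower

variable {p k N : ℕ} {F : Finset (Finset ℕ)}

/-- `N` is an admissible bound in the sunflower problem: every family of more than `N` distinct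
`k`-element sets contains a `p`-sunflower. The least such `N` is `Sun p k`. -/
def ForcesSunflower (p k N : ℕ) : Prop :=
  ∀ F : Finset (Finset ℕ), (∀ A ∈ F, #A = k) → N < #F → ∃ G ⊆ F, IsSunflowerFam p G

theorem IsSunflowerFam.image {φ : Finset ℕ → Finset ℕ} (hF : IsSunflowerFam p F)
    (hφ : Set.InjOn φ F) (hinter : ∀ A ∈ F, ∀ B ∈ F, φ A ∩ φ B = φ (A ∩ B)) :
    IsSunflowerFam p (F.image φ) := by
  obtain ⟨hcard, C, hC⟩ := hF
  refine ⟨by rw [Finset.card_image_of_injOn hφ, hcard], φ C, ?_⟩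
  simp only [Finset.forall_mem_image]
  intro A hA B hB hne
  rw [hinter A hA B hB, hC A hA B hB (ne_of_apply_ne φ hne)]

theorem isSunflowerFam_of_pairwiseDisjoint (hF : (F : Set (Finset ℕ)).PairwiseDisjoint id) :
    IsSunflowerFam #F F :=
  ⟨rfl, ∅, fun _ hA _ hB hne => Finset.disjoint_iff_inter_eq_empty.1 (hF hA hB hne)⟩

theorem exists_pairwiseDisjoint_subset_forall_not_disjoint {α : Type*} [DecidableEq α]
    (F : Finset (Finset α)) :
    ∃ G ⊆ F, (G : Set (Finset α)).PairwiseDisjoint id ∧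
      ∀ A ∈ F, A.Nonempty → ¬ Disjoint A (G.biUnion id) := by
  classical
  obtain ⟨G, -, hG⟩ := Finset.exists_le_maximal
    (F.powerset.filter fun G : Finset (Finset α) => (G : Set (Finset α)).PairwiseDisjoint id)
    (a := ∅) (by simp)
  obtain ⟨hGF, hdisj⟩ : G ⊆ F ∧ (G : Set (Finset α)).PairwiseDisjoint id := by
    simpa using hG.prop
  refine ⟨G, hGF, hdisj, fun A hA hne hAG => ?_⟩
  rw [Finset.disjoint_biUnion_right] at hAG
  have hmem : A ∈ G := hG.le_of_ge (y := insert A G) (by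
    simp only [Finset.mem_filter, Finset.mem_powerset, Finset.coe_insert]
    exact ⟨Finset.insert_subset hA hGF, hdisj.insert fun B hB _ => hAG B hB⟩)
    (Finset.subset_insert A G) (Finset.mem_insert_self A G)
  exact hne.ne_empty (disjoint_self.1 (hAG A hmem))

theorem exists_isSunflowerFam_of_memberSubfamily {u : ℕ}
    (h : ∃ G ⊆ F.memberSubfamily u, IsSunflowerFam p G) : ∃ G ⊆ F, IsSunflowerFam p G := by
  obtain ⟨G, hGF, hG⟩ := h
  have hmem : ∀ A ∈ G, insert u A ∈ F ∧ u ∉ A := fun A hA => Finset.mem_memberSubfamily.1 (hGF hA)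
  refine ⟨G.image (insert u), Finset.image_subset_iff.2 fun A hA => (hmem A hA).1,
    hG.image (fun A hA B hB hAB => ?_) fun A _ B _ => (Finset.insert_inter_distrib A B u).symm⟩
  rw [← Finset.erase_insert (hmem A hA).2, ← Finset.erase_insert (hmem B hB).2, hAB]

theorem card_memberSubfamily (u : ℕ) (F : Finset (Finset ℕ)) :
    #(F.memberSubfamily u) = #{A ∈ F | u ∈ A} :=
  Finset.card_image_of_injOn ((Finset.erase_injOn' u).mono fun _ hA => (Finset.mem_filter.1 hA).2)

theorem ForcesSunflower.succ (h : ForcesSunflower p k N) :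
    ForcesSunflower p (k + 1) (p * (k + 1) * N) := by
  intro F hF hcard
  obtain ⟨G, hGF, hdisj, hmeet⟩ := exists_pairwiseDisjoint_subset_forall_not_disjoint F
  by_cases hp : p ≤ #G
  · obtain ⟨H, hHG, rfl⟩ := Finset.exists_subset_card_eq hp
    exact ⟨H, hHG.trans hGF, isSunflowerFam_of_pairwiseDisjoint (hdisj.subset hHG)⟩
  have hU : #(G.biUnion id) * N < #F := by
    refine lt_of_le_of_lt ?_ hcard
    gcongr
    exact (Finset.card_biUnion_le_card_mul G id (k + 1) fun A hA => (hF A (hGF hA)).le).trans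
      (by gcongr; omega)
  have hpoint : ∀ A ∈ F, ∃ u ∈ A, u ∈ G.biUnion id := fun A hA =>
    Finset.not_disjoint_iff.1 (hmeet A hA (Finset.card_pos.1 (by rw [hF A hA]; omega)))
  choose! f hfA hfU using hpoint
  obtain ⟨u, -, hu⟩ := Finset.exists_lt_card_fiber_of_mul_lt_card_of_maps_to hfU hU
  refine exists_isSunflowerFam_of_memberSubfamily (u := u) (h _ (fun A hA => ?_) ?_)
  · obtain ⟨hAF, huA⟩ := Finset.mem_memberSubfamily.1 hA
    have := hF _ hAF
    rwa [Finset.card_insert_of_notMem huA, Nat.add_right_cancel_iff] at this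
  · rw [card_memberSubfamily]
    refine hu.trans_le (Finset.card_le_card fun A hA => ?_)
    obtain ⟨hAF, rfl⟩ := Finset.mem_filter.1 hA
    exact Finset.mem_filter.2 ⟨hAF, hfA A hAF⟩

theorem exists_forcesSunflower (p k : ℕ) : ∃ N, ForcesSunflower p k N := by
  induction k with
  | zero =>
    refine ⟨1, fun F hF hcard => ?_⟩
    have hsub : F ⊆ {∅} := fun A hA => Finset.mem_singleton.2 (Finset.card_eq_zero.1 (hF A hA))
    exact absurd (Finset.card_le_card hsub) (by simpa using hcard)
  | succ k ih =>
    obtain ⟨N, hN⟩ := ih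
    exact ⟨_, hN.succ⟩

theorem forcesSunflower_sun (p k : ℕ) : ForcesSunflower p k (Sun p k) :=
  Nat.sInf_mem (s := {N | ForcesSunflower p k N}) (exists_forcesSunflower p k)

-- Each set is enlarged by a private new element; truncating below `M` undoes this.
theorem ForcesSunflower.of_succ (h : ForcesSunflower p (k + 1) N) : ForcesSunflower p k N := by
  intro F hF hcard
  obtain ⟨M, hM⟩ : ∃ M, ∀ A ∈ F, ∀ i ∈ A, i < M := by
    obtain ⟨M, hM⟩ := (F.biUnion id).exists_nat_subset_range
    exact ⟨M, fun A hA i hi => Finset.mem_range.1 (hM (Finset.mem_biUnion.2 ⟨A, hA, hi⟩))⟩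
  let extend : Finset ℕ → Finset ℕ := fun A => insert (M + Encodable.encode A) A
  have htruncate : ∀ A ∈ F, {i ∈ extend A | i < M} = A := by
    intro A hA
    rw [Finset.filter_insert, if_neg (by omega), Finset.filter_true_of_mem (hM A hA)]
  have hinj : Set.InjOn extend F := fun A hA B hB hAB => by
    rw [← htruncate A hA, ← htruncate B hB, hAB]
  have hextend : ∀ A ∈ F, #(extend A) = k + 1 := fun A hA => by
    rw [Finset.card_insert_of_notMem fun hmem => by have := hM A hA _ hmem; omega, hF A hA]
  obtain ⟨G, hGF, hG⟩ := h (F.image extend) (Finset.forall_mem_image.2 hextend)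
    (by rwa [Finset.card_image_of_injOn hinj])
  obtain ⟨H, hHF, rfl⟩ := Finset.subset_image_iff.1 hGF
  refine ⟨_, ?_, hG.image (φ := fun A => {i ∈ A | i < M}) ?_ fun A _ B _ =>
    (Finset.filter_inter_distrib _ A B).symm⟩
  · simp only [Finset.image_subset_iff, Finset.forall_mem_image]
    exact fun A hA => (htruncate A (hHF hA)).symm ▸ hHF hA
  · rw [Finset.coe_image]
    refine Set.InjOn.image_of_comp fun A hA B hB hAB => ?_
    simpa only [Function.comp_apply, htruncate A (hHF hA), htruncate B (hHF hB)] using hAB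

theorem ForcesSunflower.of_le {r : ℕ} (h : ForcesSunflower p k N) (hrk : r ≤ k) :
    ForcesSunflower p r N :=
  Nat.decreasingInduction' (P := fun j => ForcesSunflower p j N) (fun _ _ _ h => h.of_succ) hrk h

end Sunflower

section Averaging

variable {α β ι : Type*} [Fintype α]

theorem card_filter_eqOn [DecidableEq α] [Fintype ι] [DecidableEq ι] (D : Finset ι) (w : ι → α) :
    #{g : ι → α | ∀ i ∈ D, w i = g i} = Fintype.card α ^ (Fintype.card ι - #D) := by
  have hpi : ({g : ι → α | ∀ i ∈ D, w i = g i} : Finset (ι → α)) =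
      Fintype.piFinset fun i => if i ∈ D then {w i} else Finset.univ := by
    ext g
    simp only [Finset.mem_filter, Finset.mem_univ, true_and, Fintype.mem_piFinset]
    refine forall_congr' fun i => ?_
    split_ifs with hi <;> simp [hi, eq_comm]
  rw [hpi, Fintype.card_piFinset, ← Finset.card_compl, ← Finset.prod_const,
    ← Finset.prod_compl_mul_prod D]
  rw [Finset.prod_eq_one (s := D) fun i hi => by simp [hi], mul_one]
  exact Finset.prod_congr rfl fun i hi => by simp [Finset.mem_compl.1 hi]

-- A uniformly random word agrees with `w z` on the `r` coordinates of `D z` with probability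
-- `(card α) ^ (-r)`.
theorem card_le_pow_mul_of_forall_eqOn_card_le [Nonempty α] (F : Finset β) (w : β → ι → α)
    (D : β → Finset ι) {r N : ℕ} (hD : ∀ z ∈ F, #(D z) = r)
    (hN : ∀ G ⊆ F, ∀ x : ι → α, (∀ z ∈ G, ∀ i ∈ D z, w z i = x i) → #G ≤ N) :
    #F ≤ Fintype.card α ^ r * N := by
  classical
  obtain rfl | ⟨z₀, hz₀⟩ := F.eq_empty_or_nonempty
  · simp
  let U := F.biUnion D
  have hDU : ∀ z ∈ F, D z ⊆ U := fun z hz => Finset.subset_biUnion_of_mem D hz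
  let agree : β → (U → α) → Prop := fun z g => ∀ i ∈ (D z).subtype (· ∈ U), w z i = g i
  have habove : ∀ z ∈ F, Fintype.card α ^ (#U - r) ≤ #(Finset.univ.bipartiteAbove agree z) := by
    intro z hz
    have hcard : #((D z).subtype (· ∈ U)) = r := by
      rw [Finset.card_subtype, Finset.filter_true_of_mem (hDU z hz), hD z hz]
    rw [← hcard, ← Fintype.card_coe U]
    exact (card_filter_eqOn ((D z).subtype (· ∈ U)) fun i => w z i).ge
  have hbelow : ∀ g ∈ (Finset.univ : Finset (U → α)), #(F.bipartiteBelow agree g) ≤ N := by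
    intro g _
    refine hN _ (Finset.filter_subset _ _)
      (fun i => if h : i ∈ U then g ⟨i, h⟩ else Classical.arbitrary α) fun z hz i hi => ?_
    obtain ⟨hzF, hagree⟩ := Finset.mem_filter.1 hz
    simpa only [hDU z hzF hi, dif_pos] using
      hagree ⟨i, hDU z hzF hi⟩ (Finset.mem_subtype.2 hi)
  have hr : r ≤ #U := hD z₀ hz₀ ▸ Finset.card_le_card (hDU z₀ hz₀)
  have hcount := Finset.card_mul_le_card_mul agree habove hbelow
  rw [Finset.card_univ, Fintype.card_fun, Fintype.card_coe] at hcount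
  refine Nat.le_of_mul_le_mul_right (hcount.trans_eq ?_)
    (Nat.pow_pos (n := #U - r) (Fintype.card_pos (α := α)))
  rw [mul_right_comm, ← pow_add, Nat.add_sub_cancel' hr]

end Averaging

section CardLE

variable {α : Type*} {s : Set α} {M K : ℝ}

/-- `s` is finite with at most `M` elements. Phrased through finite subsets, so that no finiteness
has to be known beforehand (`Set.ncard` of an infinite set is `0`). -/
def CardLE (s : Set α) (M : ℝ) : Prop := ∀ F : Finset α, ↑F ⊆ s → (#F : ℝ) ≤ M

theorem CardLE.nonneg (h : CardLE s M) : 0 ≤ M := by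
  simpa using h ∅ (by simp)

theorem CardLE.trans_le (h : CardLE s M) (hM : M ≤ K) : CardLE s K :=
  fun F hF => (h F hF).trans hM

theorem CardLE.finite (h : CardLE s M) : s.Finite := by
  by_contra hs
  obtain ⟨N, hN⟩ := exists_nat_gt M
  obtain ⟨F, hF, rfl⟩ := Set.Infinite.exists_subset_card_eq hs N
  exact (h F hF).not_gt hN

theorem CardLE.ncard_le (h : CardLE s M) : (s.ncard : ℝ) ≤ M := by
  rw [Set.ncard_eq_toFinset_card s h.finite]
  exact h _ (by simp)

theorem CardLE.of_subset_biUnion {κ : Type*} {I : Finset κ} {t : κ → Set α}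
    (h : ∀ k ∈ I, CardLE (t k) M) (hs : s ⊆ ⋃ k ∈ I, t k) : CardLE s (#I * M) := by
  classical
  intro F hF
  have hcover : F ⊆ I.biUnion fun k => {z ∈ F | z ∈ t k} := fun z hz => by
    simpa [hz] using hs (hF hz)
  calc (#F : ℝ) ≤ ∑ k ∈ I, (#{z ∈ F | z ∈ t k} : ℝ) := by
        exact_mod_cast (Finset.card_le_card hcover).trans Finset.card_biUnion_le
    _ ≤ #I * M := by
        rw [← nsmul_eq_mul]
        exact Finset.sum_le_card_nsmul _ _ _ fun k hk => h k hk _ fun z hz =>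
          (Finset.mem_filter.1 hz).2

end CardLE

section Distance

variable {n d : ℕ} {T : Set ℕ} {a b c s x x' y z : ℕ → Fin n}

/-- The Hamming distance restricted to the coordinates in `T`. It splits distances into the part on
the first `d` coordinates and the tail, and into the parts on and off a support. -/
noncomputable def hDistOn (T : Set ℕ) (x y : ℕ → Fin n) : ℕ∞ := {i ∈ T | x i ≠ y i}.encard

theorem hDistOn_congr_left (h : ∀ i ∈ T, x i = x' i) : hDistOn T x y = hDistOn T x' y := by
  unfold hDistOn
  congr 1
  ext i
  exact and_congr_right fun hi => by rw [h i hi]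

theorem hDistOn_comm : hDistOn T x y = hDistOn T y x := by
  simp only [hDistOn, ne_comm]

theorem hDistOn_add_hDistOn_compl (T : Set ℕ) (x y : ℕ → Fin n) :
    hDistOn T x y + hDistOn Tᶜ x y = hDist n x y := by
  rw [hDistOn, hDistOn, hDist, ← Set.encard_union_eq]
  · congr 1
    ext i
    simp only [Set.mem_union, Set.mem_ofPred_eq, Set.mem_compl_iff]
    tauto
  · exact Set.disjoint_left.2 fun i hi hi' => hi'.1 hi.1

theorem hDistOn_coe_finset (D : Finset ℕ) (x y : ℕ → Fin n) :
    hDistOn (D : Set ℕ) x y = #{i ∈ D | x i ≠ y i} := by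
  rw [← Set.encard_coe_eq_coe_finsetCard, Finset.coe_filter]
  rfl

theorem hDistOn_Iio (d : ℕ) (x y : ℕ → Fin n) :
    hDistOn (Set.Iio d) x y = hammingDist (fun i : Fin d => x i) (fun i : Fin d => y i) := by
  rw [hDistOn, hammingDist, ← Set.encard_coe_eq_coe_finsetCard,
    ← Fin.val_injective.encard_image]
  congr 1
  ext i
  simp only [Set.mem_ofPred_eq, Set.mem_Iio, Set.mem_image, Finset.coe_filter, Finset.mem_univ,
    true_and]
  exact ⟨fun h => ⟨⟨i, h.1⟩, h.2, rfl⟩, by rintro ⟨j, hj, rfl⟩; exact ⟨j.2, hj⟩⟩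

theorem hDist_comm : hDist n x y = hDist n y x := by
  simp only [hDist, ne_comm]

theorem hDist_triangle (x y z : ℕ → Fin n) : hDist n x z ≤ hDist n x y + hDist n y z := by
  refine (Set.encard_le_encard fun i hi => ?_).trans (Set.encard_union_le _ _)
  exact or_iff_not_imp_left.2 fun hxy hyz => hi ((not_not.1 hxy).trans hyz)

theorem hBall_subset_hBall {r r' : ℕ} (h : hDist n x y + r ≤ r') : hBall n x r ⊆ hBall n y r' :=
  fun w hw => calc
    hDist n w y ≤ hDist n w x + hDist n x y := hDist_triangle w x y
    _ ≤ r + hDist n x y := by gcongr; exact hw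
    _ ≤ r' := by rwa [add_comm]

theorem hDist_update_of_ne {i : ℕ} (h : z i ≠ c i) :
    hDist n z (Function.update c i (z i)) + 1 = hDist n z c := by
  rw [hDist, hDist, ← Set.encard_insert_of_notMem (a := i) (by simp)]
  congr 1
  ext j
  by_cases hj : j = i
  · simp [hj, h]
  · simp [hj]

theorem exists_hDist_eq_add (hn : 2 ≤ n) (h : hDist n z s ≠ ⊤) (k : ℕ) :
    ∃ y ∈ hBall n z k, hDist n y s = hDist n z s + k := by
  have : Nontrivial (Fin n) := Fin.nontrivial_iff_two_le.2 hn
  have hfin : {i | z i ≠ s i}.Finite := Set.encard_ne_top_iff.1 h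
  obtain ⟨A, hA, rfl⟩ := hfin.infinite_compl.exists_subset_card_eq k
  have hzs : ∀ i ∈ A, z i = s i := fun i hi => not_not.1 (hA hi)
  choose other hother using fun x : Fin n => exists_ne x
  have hdiff : ∀ i, A.piecewise (fun i => other (z i)) z i ≠ s i ↔ z i ≠ s i ∨ i ∈ A := by
    intro i
    by_cases hi : i ∈ A
    · simpa [hi, ← hzs i hi] using hother (z i)
    · simp [hi]
  refine ⟨A.piecewise (fun i => other (z i)) z, ?_, ?_⟩
  · change {i | _ ≠ z i}.encard ≤ _
    rw [← Set.encard_coe_eq_coe_finsetCard]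
    exact Set.encard_le_encard fun i hi => by_contra fun hiA =>
      hi (A.piecewise_eq_of_notMem _ _ hiA)
  · rw [hDist, hDist, ← Set.encard_coe_eq_coe_finsetCard, ← Set.encard_union_eq]
    · congr 1
      ext i
      exact hdiff i
    · exact Set.disjoint_left.2 fun i hi hiA => hi (hzs i hiA)

end Distance

section Maximal

variable {n d ℓ : ℕ} {S : Set (ℕ → Fin n)} {c s z : ℕ → Fin n}

theorem hDist_add_le_of_hBall_subset (hn : 2 ≤ n) (hS : ∀ x ∈ S, hDist n x s ≤ d)
    (hz : z ∈ S) {k : ℕ} (hball : hBall n z k ⊆ S) : hDist n z s + k ≤ d := by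
  obtain ⟨y, hy, hys⟩ :=
    exists_hDist_eq_add hn (ne_top_of_le_ne_top (ENat.natCast_ne_top d) (hS z hz)) k
  exact hys ▸ hS y (hball hy)

theorem IsDMaximal.hBall_subset (hmax : IsDMaximal n d S) {k : ℕ}
    (h : ∀ s ∈ S, hDist n c s + k ≤ d) : hBall n c k ⊆ S :=
  fun y hy => hmax.2.2 y fun s hs => calc
    hDist n y s ≤ hDist n y c + hDist n c s := hDist_triangle y c s
    _ ≤ k + hDist n c s := by gcongr; exact hy
    _ ≤ d := by rw [add_comm]; exact h s hs

theorem IsDMaximal.exists_le_hDist_add (hmax : IsDMaximal n d S) {L : ℕ}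
    (hball : ¬ ContainsBall n S (L + 1)) (c : ℕ → Fin n) :
    ∃ s ∈ S, (d : ℕ∞) ≤ hDist n c s + L := by
  by_contra! hclose
  refine hball ⟨c, hmax.hBall_subset fun s hs => ?_⟩
  have := hclose s hs
  generalize hDist n c s = t at *
  enat_to_nat
  omega

theorem notMem_Sell_of_hBall_subset {k : ℕ} (hk : k ≠ 0) (hzc : hDist n z c = k)
    (hball : hBall n c (ℓ + k) ⊆ S) : z ∉ Sell n S ℓ := by
  rintro ⟨-, -, hmaximal⟩
  obtain ⟨i, hi⟩ : ∃ i, z i ≠ c i := by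
    by_contra! h
    rw [funext h] at hzc
    simp [hDist, eq_comm, hk] at hzc
  let w := Function.update z i (c i)
  have hzw : hDist n z w = 1 := by
    have : {j | z j ≠ w j} = {i} := by
      ext j
      by_cases hj : j = i
      · simpa [w, hj] using hi
      · simp [w, hj]
    rw [hDist, this, Set.encard_singleton]
  have hwc : hDist n w c + 1 = k := by
    rw [← hzc, hDist_comm, hDist_comm (x := z)]
    exact hDist_update_of_ne hi.symm
  refine hmaximal ⟨w, hBall_subset_hBall ?_, (hBall_subset_hBall ?_).trans hball⟩
  · rw [hzw, add_comm]; rfl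
  · rw [Nat.cast_add, Nat.cast_add, ← hwc, Nat.cast_one]
    exact le_of_eq (by ring)

end Maximal

section AnchoredSphere

variable {n d ℓ r : ℕ} {T : Set ℕ} {S : Set (ℕ → Fin n)} {a c s x z : ℕ → Fin n}

/-- The words at distance `r` from `c` that leave `c` only at coordinates of `T` where `c` still has
the letter of the anchor `a`. In the induction on `r`, `T` is the tail and `c` is obtained from
`a` by prescribing letters. -/
def anchoredSphere (T : Set ℕ) (a c : ℕ → Fin n) (r : ℕ) : Set (ℕ → Fin n) :=
  {z | hDist n z c = r ∧ ∀ i, z i ≠ c i → i ∈ T ∧ c i = a i}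

theorem exists_support_of_mem_anchoredSphere (hz : z ∈ anchoredSphere T a c r) :
    ∃ D : Finset ℕ, #D = r ∧ ∀ i, i ∈ D ↔ z i ≠ c i := by
  have hfin : {i | z i ≠ c i}.Finite :=
    Set.encard_ne_top_iff.1 (hz.1.trans_ne (ENat.natCast_ne_top r))
  refine ⟨hfin.toFinset, ?_, fun i => hfin.mem_toFinset⟩
  have := hz.1
  rw [hDist, hfin.encard_eq_coe_toFinset_card] at this
  exact_mod_cast this

theorem mem_anchoredSphere_update (hz : z ∈ anchoredSphere T a c (r + 1)) {i : ℕ}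
    (hi : z i ≠ c i) : z ∈ anchoredSphere T a (Function.update c i (z i)) r := by
  refine ⟨?_, fun j hj => ?_⟩
  · have := (hDist_update_of_ne hi).trans hz.1
    generalize hDist n z _ = t at *
    enat_to_nat
    omega
  · obtain rfl | hji := eq_or_ne j i
    · simp at hj
    · rw [Function.update_of_ne hji] at hj ⊢
      exact hz.2 j hj

theorem ne_piecewise_iff {C : Finset ℕ} (hC : ∀ i ∈ C, z i = x i) (i : ℕ) :
    z i ≠ C.piecewise x c i ↔ z i ≠ c i ∧ i ∉ C := by
  by_cases hi : i ∈ C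
  · simp [hi, hC i hi]
  · simp [hi]

theorem mem_anchoredSphere_piecewise (hz : z ∈ anchoredSphere T a c r) {C : Finset ℕ}
    (hCz : ∀ i ∈ C, z i ≠ c i) (hCx : ∀ i ∈ C, z i = x i) :
    z ∈ anchoredSphere T a (C.piecewise x c) (r - #C) := by
  refine ⟨?_, fun i hi => ?_⟩
  · have hsplit : {i | z i ≠ C.piecewise x c i} = {i | z i ≠ c i} \ C := by
      ext i
      exact ne_piecewise_iff hCx i
    have := hz.1
    rw [hDist, ← Set.encard_sdiff_add_encard_of_subset
      (show (C : Set ℕ) ⊆ {i | z i ≠ c i} from hCz), Set.encard_coe_eq_coe_finsetCard,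
      ← hsplit, ← hDist] at this
    generalize hDist n z _ = t at *
    enat_to_nat
    omega
  · obtain ⟨hic, hiC⟩ := (ne_piecewise_iff hCx i).1 hi
    rw [C.piecewise_eq_of_notMem x c hiC]
    exact hz.2 i hic

theorem hDist_eq_add_of_disjoint (hz : z ∈ anchoredSphere T a c r)
    (hdisj : Disjoint {i | z i ≠ c i} {i ∈ T | s i ≠ a i}) : hDist n z s = hDist n c s + r := by
  have hcs : ∀ i, z i ≠ c i → c i = s i := fun i hi => by
    obtain ⟨hiT, hca⟩ := hz.2 i hi
    by_contra hne
    exact Set.disjoint_left.1 hdisj hi ⟨hiT, fun hsa => hne (hca.trans hsa.symm)⟩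
  rw [hDist, hDist, ← hz.1, hDist, ← Set.encard_union_eq]
  · congr 1
    ext i
    by_cases hi : z i = c i
    · simp [hi]
    · simp [hi, ← hcs i hi]
  · exact Set.disjoint_left.2 fun i hi hi' => hi (hcs i hi')

end AnchoredSphere

section SunflowerBound

variable {n d ℓ r : ℕ} {T : Set ℕ} {S : Set (ℕ → Fin n)} {a c x : ℕ → Fin n}

theorem exists_disjoint_of_encard_lt_card {β ι : Type*} {Q : Finset β} {D : β → Set ι}
    {B : Set ι} (hD : (Q : Set β).PairwiseDisjoint D) (hB : B.encard < #Q) :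
    ∃ u ∈ Q, Disjoint (D u) B := by
  by_contra! hmeet
  simp only [Set.not_disjoint_iff] at hmeet
  have : Nonempty ι := by
    obtain ⟨u, hu⟩ := Finset.card_pos.1 (Nat.cast_pos.1 (bot_le.trans_lt hB))
    exact ⟨(hmeet u hu).choose⟩
  choose! f hfD hfB using hmeet
  refine hB.not_ge ?_
  rw [← Set.encard_coe_eq_coe_finsetCard]
  refine Set.encard_le_encard_of_injOn hfB fun u hu v hv huv => by_contra fun hne => ?_
  exact Set.disjoint_left.1 (hD hu hv hne) (hfD u hu) (huv ▸ hfD v hv)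

-- With more than `d / 2` petals, every `s ∈ S` misses the petal of some `u ∈ Q`; hence
-- `hDist c s + k + ℓ = hDist u s + ℓ ≤ d`, and `S` contains the `(ℓ + k)`-ball around `c`.
theorem two_mul_card_le_of_pairwiseDisjoint (hn : 2 ≤ n) (hmax : IsDMaximal n d S)
    (hT : ∀ s ∈ S, 2 * hDistOn T s a ≤ d) {k : ℕ} (hk : k ≠ 0) {Q : Finset (ℕ → Fin n)}
    (hQ : ↑Q ⊆ Sell n S ℓ ∩ anchoredSphere T a c k)
    (hdisj : (Q : Set (ℕ → Fin n)).PairwiseDisjoint fun z => {i | z i ≠ c i}) : 2 * #Q ≤ d := by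
  by_contra! hlt
  obtain ⟨z, hz⟩ : Q.Nonempty := Finset.card_pos.1 (by omega)
  refine notMem_Sell_of_hBall_subset hk (hQ hz).2.1 (hmax.hBall_subset fun s hs => ?_) (hQ hz).1
  have hsa : hDistOn T s a < #Q := by
    have := (hT s hs).trans_lt (Nat.cast_lt.2 hlt)
    push_cast at this
    exact lt_of_mul_lt_mul_left' this
  obtain ⟨u, hu, hus⟩ := exists_disjoint_of_encard_lt_card hdisj hsa
  have hle : hDist n u s + ℓ ≤ d := hDist_add_le_of_hBall_subset hn
    (fun y hy => hmax.1 y hy s hs) (hQ hu).1.1 (hQ hu).1.2.1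
  rwa [hDist_eq_add_of_disjoint (hQ hu).2 hus, add_assoc, add_comm (k : ℕ∞), ← Nat.cast_add]
    at hle

theorem two_mul_card_le_of_pairwise_inter_eq (hn : 2 ≤ n) (hmax : IsDMaximal n d S)
    (hT : ∀ s ∈ S, 2 * hDistOn T s a ≤ d) {Q : Finset (ℕ → Fin n)} (hQ1 : 1 < #Q)
    (hQ : ↑Q ⊆ Sell n S ℓ ∩ anchoredSphere T a c r)
    (hx : ∀ z ∈ Q, ∀ i, z i ≠ c i → z i = x i) {C : Finset ℕ}
    (hC : (Q : Set (ℕ → Fin n)).Pairwise fun u v => {i | u i ≠ c i} ∩ {i | v i ≠ c i} = C) :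
    2 * #Q ≤ d := by
  have hCz : ∀ z ∈ Q, ∀ i ∈ C, z i ≠ c i := fun z hz i hi => by
    obtain ⟨u, hu, huz⟩ := Finset.exists_mem_ne hQ1 z
    exact ((hC hz hu huz.symm).ge hi).1
  have hCx : ∀ z ∈ Q, ∀ i ∈ C, z i = x i := fun z hz i hi => hx z hz i (hCz z hz i hi)
  have hQC : ∀ z ∈ Q, z ∈ anchoredSphere T a (C.piecewise x c) (r - #C) := fun z hz =>
    mem_anchoredSphere_piecewise (hQ hz).2 (hCz z hz) (hCx z hz)
  have hne : r - #C ≠ 0 := by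
    intro h0
    have heq : ∀ z ∈ Q, z = C.piecewise x c := fun z hz => by
      simpa [h0, hDist, Set.eq_empty_iff_forall_notMem, ← funext_iff] using (hQC z hz).1
    exact hQ1.not_ge (Finset.card_le_one.2 fun u hu v hv => (heq u hu).trans (heq v hv).symm)
  refine two_mul_card_le_of_pairwiseDisjoint hn hmax hT hne
    (fun z hz => ⟨(hQ hz).1, hQC z hz⟩) fun u hu v hv huv => Set.disjoint_left.2 fun i hiu hiv => ?_
  obtain ⟨hiuc, hiC⟩ := (ne_piecewise_iff (hCx u hu) i).1 hiu
  exact hiC ((hC hu hv huv).le ⟨hiuc, ((ne_piecewise_iff (hCx v hv) i).1 hiv).1⟩)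

theorem card_le_of_forcesSunflower (hn : 2 ≤ n) (hmax : IsDMaximal n d S)
    (hT : ∀ s ∈ S, 2 * hDistOn T s a ≤ d) {q N : ℕ} (hq : 2 ≤ q) (hdq : d < 2 * q)
    (hN : ForcesSunflower q r N) {F : Finset (ℕ → Fin n)}
    (hF : ↑F ⊆ Sell n S ℓ ∩ anchoredSphere T a c r)
    (hx : ∀ z ∈ F, ∀ i, z i ≠ c i → z i = x i) : #F ≤ N := by
  classical
  by_contra! hcard
  choose! D hDcard hD using fun z (hz : z ∈ F) => exists_support_of_mem_anchoredSphere (hF hz).2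
  have hinj : Set.InjOn D F := fun u hu v hv huv => funext fun i => by
    have hiff : u i ≠ c i ↔ v i ≠ c i := by rw [← hD u hu, ← hD v hv, huv]
    by_cases hi : u i = c i
    · rw [hi, not_ne_iff.1 (hiff.not.1 (not_not.2 hi))]
    · rw [hx u hu i hi, hx v hv i (hiff.1 hi)]
  obtain ⟨G, hGF, hGq, C, hC⟩ := hN (F.image D) (Finset.forall_mem_image.2 hDcard)
    (by rwa [Finset.card_image_of_injOn hinj])
  obtain ⟨Q, hQF, rfl⟩ := Finset.subset_image_iff.1 hGF
  rw [Finset.card_image_of_injOn (hinj.mono hQF)] at hGq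
  have hcore : (Q : Set (ℕ → Fin n)).Pairwise
      fun u v => {i | u i ≠ c i} ∩ {i | v i ≠ c i} = C := fun u hu v hv huv => by
    rw [← hC _ (Finset.mem_image_of_mem D hu) _ (Finset.mem_image_of_mem D hv)
      fun h => huv (hinj (hQF hu) (hQF hv) h)]
    ext i
    simp [hD u (hQF hu), hD v (hQF hv)]
  have := two_mul_card_le_of_pairwise_inter_eq hn hmax hT (by omega) (fun z hz => hF (hQF hz))
    (fun z hz => hx z (hQF hz)) hcore
  omega

theorem cardLE_Sell_inter_anchoredSphere (hn : 2 ≤ n) (hmax : IsDMaximal n d S)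
    (hT : ∀ s ∈ S, 2 * hDistOn T s a ≤ d) {q N : ℕ} (hq : 2 ≤ q) (hdq : d < 2 * q)
    (hN : ForcesSunflower q r N) (c : ℕ → Fin n) :
    CardLE (Sell n S ℓ ∩ anchoredSphere T a c r) (n ^ r * N) := by
  intro F hF
  have : NeZero n := ⟨by omega⟩
  choose! D hDcard hD using fun z (hz : z ∈ F) => exists_support_of_mem_anchoredSphere (hF hz).2
  have := card_le_pow_mul_of_forall_eqOn_card_le F id D (N := N) hDcard fun G hGF x hx =>
    card_le_of_forcesSunflower hn hmax hT hq hdq hN (fun z hz => hF (hGF hz))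
      fun z hz i hi => hx z hz i ((hD z (hGF hz) i).2 hi)
  rw [Fintype.card_fin] at this
  exact_mod_cast this

end SunflowerBound

section DistanceInduction

variable {n d L ℓ r : ℕ} {T : Set ℕ} {P S : Set (ℕ → Fin n)} {a c s z : ℕ → Fin n} {M : ℝ}
  {F : Finset (ℕ → Fin n)}

-- Among the `r` coordinates where `z` leaves `c`, moving to `z` loses agreement with `s` only where
-- `c i = s i`; the coordinates with `c i ≠ s i` or `z i = s i` all lie in `B`, because there
-- `c i = a i ≠ s i`.
theorem le_add_card_filter_add_card_filter (hz : z ∈ anchoredSphere T a c r)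
    (hzs : hDist n z s ≤ d) (hcs : d ≤ hDist n c s + L) {B : Finset ℕ}
    (hB : ∀ i, i ∈ B ↔ i ∈ T ∧ s i ≠ a i) :
    r ≤ L + #{i ∈ B | z i ≠ c i} + #{i ∈ B | z i ≠ c i ∧ z i = s i} := by
  obtain ⟨D, rfl, hD⟩ := exists_support_of_mem_anchoredSphere hz
  have hoff : hDistOn (D : Set ℕ)ᶜ z s = hDistOn (D : Set ℕ)ᶜ c s :=
    hDistOn_congr_left fun i hi => not_ne_iff.1 fun hne => hi ((hD i).2 hne)
  have hDB : ∀ i ∈ D, c i ≠ s i → i ∈ B := fun i hi hne => by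
    obtain ⟨hiT, hca⟩ := hz.2 i ((hD i).1 hi)
    exact (hB i).2 ⟨hiT, hca ▸ hne.symm⟩
  have hlost : #{i ∈ D | c i ≠ s i} ≤ #{i ∈ B | z i ≠ c i} :=
    Finset.card_le_card fun i hi => by
      obtain ⟨hiD, hne⟩ := Finset.mem_filter.1 hi
      exact Finset.mem_filter.2 ⟨hDB i hiD hne, (hD i).1 hiD⟩
  have hgained : #{i ∈ D | ¬ z i ≠ s i} ≤ #{i ∈ B | z i ≠ c i ∧ z i = s i} :=
    Finset.card_le_card fun i hi => by
      obtain ⟨hiD, heq⟩ := Finset.mem_filter.1 hi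
      have hne := (hD i).1 hiD
      rw [not_ne_iff] at heq
      exact Finset.mem_filter.2 ⟨hDB i hiD fun h => hne (heq.trans h.symm), hne, heq⟩
  have hcount := Finset.card_filter_add_card_filter_not (s := D) fun i => z i ≠ s i
  rw [← hDistOn_add_hDistOn_compl (D : Set ℕ), hDistOn_coe_finset] at hzs hcs
  rw [hoff] at hzs
  generalize hDistOn (D : Set ℕ)ᶜ c s = t at hzs hcs
  lift t to ℕ using fun ht => by simp [ht] at hzs
  have hzs' : #{i ∈ D | z i ≠ s i} + t ≤ d := by exact_mod_cast hzs
  have hcs' : d ≤ #{i ∈ D | c i ≠ s i} + t + L := by exact_mod_cast hcs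
  omega

theorem card_filter_eq_le (hM : ∀ c, CardLE (P ∩ anchoredSphere T a c r) M)
    (hF : ↑F ⊆ P ∩ anchoredSphere T a c (r + 1)) (i : ℕ) (x : Fin n) :
    (#{z ∈ F | z i ≠ c i ∧ z i = x} : ℝ) ≤ M := by
  refine hM (Function.update c i x) _ fun z hz => ?_
  obtain ⟨hzF, hne, rfl⟩ := Finset.mem_filter.1 hz
  exact ⟨(hF hzF).1, mem_anchoredSphere_update (hF hzF).2 hne⟩

theorem card_filter_ne_add_card_filter_eq_le
    (hM : ∀ c, CardLE (P ∩ anchoredSphere T a c r) M)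
    (hF : ↑F ⊆ P ∩ anchoredSphere T a c (r + 1)) (i : ℕ) (x : Fin n) :
    (#{z ∈ F | z i ≠ c i} + #{z ∈ F | z i ≠ c i ∧ z i = x} : ℝ) ≤ n * M := by
  have hfibre := Finset.card_eq_sum_card_fiberwise (f := fun z : ℕ → Fin n => z i)
    (s := {z ∈ F | z i ≠ c i}) (t := Finset.univ.erase (c i)) fun z hz => by
      simpa using (Finset.mem_filter.1 hz).2
  have hcard : #(Finset.univ.erase (c i)) + 1 = n := by
    rw [Finset.card_erase_add_one (Finset.mem_univ _), Finset.card_fin]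
  calc (#{z ∈ F | z i ≠ c i} + #{z ∈ F | z i ≠ c i ∧ z i = x} : ℝ)
      ≤ #(Finset.univ.erase (c i)) * M + M := by
        refine add_le_add ?_ (card_filter_eq_le hM hF i x)
        rw [hfibre, Nat.cast_sum, ← nsmul_eq_mul]
        refine Finset.sum_le_card_nsmul _ _ M fun y _ => ?_
        rw [Finset.filter_filter]
        exact card_filter_eq_le hM hF i y
    _ = n * M := by
        rw [← add_one_mul]
        exact_mod_cast congrArg (fun m : ℕ => (m : ℝ) * M) hcard

theorem mul_card_le_of_le_hDist_add (hM : ∀ c, CardLE (P ∩ anchoredSphere T a c r) M)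
    (hF : ↑F ⊆ P ∩ anchoredSphere T a c (r + 1)) (hPs : ∀ z ∈ P, hDist n z s ≤ d)
    (hcs : d ≤ hDist n c s + L) (hsa : 2 * hDistOn T s a ≤ d) :
    (r + 1 - L : ℝ) * #F ≤ d * (n / 2) * M := by
  obtain ⟨B, hB, hBd⟩ : ∃ B : Finset ℕ, (∀ i, i ∈ B ↔ i ∈ T ∧ s i ≠ a i) ∧ 2 * #B ≤ d := by
    have hfin : {i ∈ T | s i ≠ a i}.Finite := Set.encard_ne_top_iff.1 fun h => by
      simp [hDistOn, h] at hsa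
    refine ⟨hfin.toFinset, fun i => hfin.mem_toFinset, ?_⟩
    rw [hDistOn, hfin.encard_eq_coe_toFinset_card] at hsa
    exact_mod_cast hsa
  have hweight : (#F * (r + 1) : ℝ) ≤ #F * L +
      ∑ i ∈ B, (#{z ∈ F | z i ≠ c i} + #{z ∈ F | z i ≠ c i ∧ z i = s i} : ℝ) := by
    have h := Finset.sum_le_sum fun z hz => le_add_card_filter_add_card_filter (hF hz).2
      (hPs z (hF hz).1) hcs hB
    have h1 := Finset.sum_card_bipartiteAbove_eq_sum_card_bipartiteBelow (s := F) (t := B)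
      fun z i => z i ≠ c i
    have h2 := Finset.sum_card_bipartiteAbove_eq_sum_card_bipartiteBelow (s := F) (t := B)
      fun z i => z i ≠ c i ∧ z i = s i
    simp only [Finset.bipartiteAbove, Finset.bipartiteBelow] at h1 h2
    simp only [Finset.sum_add_distrib, Finset.sum_const, smul_eq_mul, h1, h2, mul_one] at h ⊢
    rw [← add_assoc, mul_add_one]
    exact_mod_cast h
  have hM0 : 0 ≤ M := (hM c).nonneg
  have hBd' : (#B : ℝ) ≤ d / 2 := by
    rw [le_div_iff₀ two_pos, mul_comm]
    exact_mod_cast hBd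
  calc (r + 1 - L : ℝ) * #F = #F * (r + 1) - #F * L := by ring
    _ ≤ ∑ i ∈ B, (#{z ∈ F | z i ≠ c i} + #{z ∈ F | z i ≠ c i ∧ z i = s i} : ℝ) := by
        linarith
    _ ≤ #B * (n * M) := by
        rw [← nsmul_eq_mul]
        exact Finset.sum_le_card_nsmul _ _ _ fun i _ =>
          card_filter_ne_add_card_filter_eq_le hM hF i (s i)
    _ ≤ d / 2 * (n * M) := by gcongr
    _ = d * (n / 2) * M := by ring

end DistanceInduction

section LevelBound

variable {n d L ℓ q N : ℕ} {T : Set ℕ} {S : Set (ℕ → Fin n)} {a : ℕ → Fin n}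

theorem cardLE_Sell_inter_anchoredSphere_two_mul_add (hn : 2 ≤ n) (hmax : IsDMaximal n d S)
    (hball : ¬ ContainsBall n S (L + 1)) (hT : ∀ s ∈ S, 2 * hDistOn T s a ≤ d) (hq : 2 ≤ q)
    (hdq : d < 2 * q) (hN : ForcesSunflower q (2 * L) N) (j : ℕ) (c : ℕ → Fin n) :
    CardLE (Sell n S ℓ ∩ anchoredSphere T a c (2 * L + j))
      (N * ((n : ℝ) / 2) ^ (2 * L + j) * (4 ^ L * d ^ j * L.factorial / (L + j).factorial)) := by
  induction j generalizing c with
  | zero =>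
    refine (cardLE_Sell_inter_anchoredSphere hn hmax hT hq hdq hN c).trans_le (le_of_eq ?_)
    rw [add_zero, add_zero, pow_zero, mul_one, mul_div_cancel_right₀ _ (by positivity), div_pow,
      show (4 : ℝ) ^ L = 2 ^ (2 * L) by rw [pow_mul]; norm_num]
    field_simp
  | succ j ih =>
    intro F hF
    obtain ⟨s, hs, hcs⟩ := hmax.exists_le_hDist_add hball c
    have hstep := mul_card_le_of_le_hDist_add ih hF (fun z hz => hmax.1 z hz.1 s hs) hcs (hT s hs)
    have hcoeff : ((2 * L + j : ℕ) + 1 - L : ℝ) = L + j + 1 := by push_cast; ring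
    rw [hcoeff, ← le_div_iff₀' (by positivity)] at hstep
    refine hstep.trans_eq ?_
    rw [← add_assoc L j 1, Nat.factorial_succ]
    push_cast
    field_simp
    ring

theorem four_pow_mul_pow_mul_factorial_le {j : ℕ} (h : 2 * (2 * L + j) ≤ d) :
    4 ^ L * d ^ j * L.factorial ≤
      (L + j).factorial * (d + (2 * L + j)).choose (2 * L + j) := by
  set r := 2 * L + j with hr
  have hchoose : d ^ r ≤ r.factorial * (d + r).choose r := by
    rw [← Nat.ascFactorial_eq_factorial_mul_choose]
    exact (Nat.pow_le_pow_left d.le_succ r).trans (Nat.pow_succ_le_ascFactorial (d + 1) r)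
  have hfactorial : r.factorial ≤ (L + j).factorial * r ^ L := by
    rw [← Nat.factorial_mul_descFactorial (n := r) (k := L) (by omega),
      show r - L = L + j by omega]
    gcongr
    exact Nat.descFactorial_le_pow _ _
  refine Nat.le_of_mul_le_mul_right ?_ r.factorial_pos
  calc 4 ^ L * d ^ j * L.factorial * r.factorial
      ≤ 4 ^ L * d ^ j * L ^ L * ((L + j).factorial * r ^ L) := by
        gcongr
        exact L.factorial_le_pow
    _ = (L + j).factorial * ((2 * L * (2 * r)) ^ L * d ^ j) := by
        rw [show 2 * L * (2 * r) = 4 * L * r by ring, mul_pow, mul_pow]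
        ring
    _ ≤ (L + j).factorial * ((d * d) ^ L * d ^ j) := by
        gcongr
        omega
    _ = (L + j).factorial * d ^ r := by rw [hr, pow_add, pow_mul, sq]
    _ ≤ (L + j).factorial * (r.factorial * (d + r).choose r) := by gcongr
    _ = (L + j).factorial * (d + r).choose r * r.factorial := by ring

theorem two_pow_le_choose_add {k : ℕ} (hk : k ≤ d) : 2 ^ k ≤ (d + k).choose k := by
  induction k with
  | zero => simp
  | succ k ih =>
    refine Nat.le_of_mul_le_mul_left ?_ k.succ_pos
    calc (k + 1) * 2 ^ (k + 1) = 2 * (k + 1) * 2 ^ k := by ring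
      _ ≤ (d + k + 1) * (d + k).choose k := by
        gcongr
        · omega
        · exact ih (by omega)
      _ = (k + 1) * (d + (k + 1)).choose (k + 1) := by
        rw [Nat.add_one_mul_choose_eq, mul_comm, add_assoc]

theorem cardLE_Sell_inter_anchoredSphere_choose (hn : 2 ≤ n) (hmax : IsDMaximal n d S)
    (hball : ¬ ContainsBall n S (L + 1)) (hT : ∀ s ∈ S, 2 * hDistOn T s a ≤ d) (hq : 2 ≤ q)
    (hdq : d < 2 * q) (hN : ForcesSunflower q (2 * L) N) {k : ℕ} (hk : 2 * k ≤ d)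
    (c : ℕ → Fin n) :
    CardLE (Sell n S ℓ ∩ anchoredSphere T a c k)
      (N * ((n : ℝ) / 2) ^ k * (d + k).choose k) := by
  obtain hkL | hLk := le_total k (2 * L)
  · refine (cardLE_Sell_inter_anchoredSphere hn hmax hT hq hdq (hN.of_le hkL) c).trans_le ?_
    have hpow : (2 : ℝ) ^ k ≤ (d + k).choose k := by
      exact_mod_cast two_pow_le_choose_add (by omega)
    calc (n ^ k * N : ℝ) = N * ((n : ℝ) / 2) ^ k * 2 ^ k := by rw [div_pow]; field_simp
      _ ≤ _ := by gcongr
  · obtain ⟨j, rfl⟩ := Nat.exists_eq_add_of_le hLk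
    refine (cardLE_Sell_inter_anchoredSphere_two_mul_add hn hmax hball hT hq hdq hN j c).trans_le ?_
    gcongr
    rw [div_le_iff₀' (by positivity)]
    exact_mod_cast four_pow_mul_pow_mul_factorial_le hk

end LevelBound

section Prefix

variable {n d L : ℕ} {S : Set (ℕ → Fin n)} {a b s z : ℕ → Fin n}

theorem le_two_mul_max_hammingDist (hfirst : {i | a i ≠ b i} = Set.Iio d) (p : Fin d → Fin n) :
    d ≤ 2 * max (hammingDist (fun i : Fin d => a i) p) (hammingDist (fun i : Fin d => b i) p) := by
  have hab : hammingDist (fun i : Fin d => a i) (fun i : Fin d => b i) = d := by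
    have hne : ∀ i : Fin d, a i ≠ b i := fun i => hfirst.ge i.2
    simp [hammingDist, hne]
  have := hammingDist_triangle_right (fun i : Fin d => a i) (fun i : Fin d => b i) p
  omega

theorem hDistOn_Ici_add_max_hammingDist_le (hfirst : {i | a i ≠ b i} = Set.Iio d)
    (hsa : hDist n a s ≤ d) (hsb : hDist n b s ≤ d) :
    hDistOn (Set.Ici d) s a + max (hammingDist (fun i : Fin d => a i) fun i : Fin d => s i)
      (hammingDist (fun i : Fin d => b i) fun i : Fin d => s i) ≤ d := by
  have htail : hDistOn (Set.Ici d) a s = hDistOn (Set.Ici d) b s :=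
    hDistOn_congr_left fun i hi => not_ne_iff.1 fun hne =>
      (Set.mem_Iio.1 (hfirst.le hne)).not_ge hi
  rw [← hDistOn_add_hDistOn_compl (Set.Iio d), Set.compl_Iio, hDistOn_Iio, add_comm] at hsa hsb
  rw [hDistOn_comm]
  obtain h | h := max_choice (hammingDist (fun i : Fin d => a i) fun i : Fin d => s i)
    (hammingDist (fun i : Fin d => b i) fun i : Fin d => s i)
  · rwa [h]
  · rwa [h, htail]

theorem two_mul_hDistOn_Ici_le (hfirst : {i | a i ≠ b i} = Set.Iio d)
    (hsa : hDist n a s ≤ d) (hsb : hDist n b s ≤ d) : 2 * hDistOn (Set.Ici d) s a ≤ d := by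
  have hmax := le_two_mul_max_hammingDist hfirst fun i => s i
  have htail := hDistOn_Ici_add_max_hammingDist_le hfirst hsa hsb
  generalize hDistOn (Set.Ici d) s a = t at htail ⊢
  enat_to_nat
  omega

/-- The word with prefix `p` that continues like `a`; it is the centre from which the words with
prefix `p` are counted. -/
def replacePrefix (p : Fin d → Fin n) (a : ℕ → Fin n) : ℕ → Fin n :=
  fun i => if h : i < d then p ⟨i, h⟩ else a i

theorem mem_anchoredSphere_replacePrefix {p : Fin d → Fin n} (hzp : ∀ i : Fin d, z i = p i)
    {k : ℕ} (hk : hDistOn (Set.Ici d) z a = k) :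
    z ∈ anchoredSphere (Set.Ici d) a (replacePrefix p a) k := by
  have hne : ∀ i, z i ≠ replacePrefix p a i ↔ i ∈ Set.Ici d ∧ z i ≠ a i := by
    intro i
    by_cases hi : i < d
    · simp [replacePrefix, hi, hzp ⟨i, hi⟩]
    · simp [replacePrefix, hi, not_lt.1 hi]
  refine ⟨?_, fun i hi => ?_⟩
  · rw [← hk, hDist, hDistOn]
    simp only [hne]
  · obtain ⟨hid, -⟩ := (hne i).1 hi
    exact ⟨hid, dif_neg (not_lt.2 hid)⟩

theorem setOf_prefix_subset_biUnion (hS : ∀ x ∈ S, ∀ y ∈ S, hDist n x y ≤ d) {P : Set (ℕ → Fin n)}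
    (hPS : P ⊆ S) (ha : a ∈ S) (hb : b ∈ S) (hfirst : {i | a i ≠ b i} = Set.Iio d)
    (p : Fin d → Fin n) :
    {z ∈ P | ∀ i : Fin d, z i = p i} ⊆
      ⋃ k ∈ Finset.range (d - max (hammingDist (fun i : Fin d => a i) p)
        (hammingDist (fun i : Fin d => b i) p) + 1),
      P ∩ anchoredSphere (Set.Ici d) a (replacePrefix p a) k := by
  rintro z ⟨hzP, hzp⟩
  have hle := hDistOn_Ici_add_max_hammingDist_le hfirst (hS a ha z (hPS hzP)) (hS b hb z (hPS hzP))
  rw [show (fun i : Fin d => z i) = p from funext hzp] at hle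
  obtain ⟨k, hk⟩ : ∃ k : ℕ, (k : ℕ∞) = hDistOn (Set.Ici d) z a :=
    ENat.ne_top_iff_exists.1 fun h => by simp [h] at hle
  rw [← hk] at hle
  norm_cast at hle
  simp only [Set.mem_iUnion, Finset.mem_range]
  exact ⟨k, by omega, hzP, mem_anchoredSphere_replacePrefix hzp hk.symm⟩

end Prefix

theorem stmt14_general (n d L : ℕ) (hd : 1 ≤ d)
    (S : Set (ℕ → Fin n)) (hmax : IsDMaximal n d S) (hball : ¬ ContainsBall n S (L + 1))
    (ℓ : ℕ) (a b : ℕ → Fin n) (ha : a ∈ S) (hb : b ∈ S)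
    (hfirst : {i | a i ≠ b i} = Set.Iio d) (p : Fin d → Fin n) (mp : ℕ)
    (hmp : mp = max (hammingDist (fun i : Fin d => a i) p)
                    (hammingDist (fun i : Fin d => b i) p))
    (q : ℕ) (hq : 2 ≤ q) (hdq : d < 2 * q) :
    {z ∈ Sell n S ℓ | ∀ i : Fin d, z i = p i}.Finite ∧
      (({z ∈ Sell n S ℓ | ∀ i : Fin d, z i = p i}.ncard : ℝ) ≤
        (d : ℝ) * (Sun q (2 * L) : ℝ) * ((n : ℝ) / 2) ^ (d - mp) *
          ((2 * d - mp).choose (d - mp) : ℝ)) := by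
  have hn : 2 ≤ n := Fin.nontrivial_iff_two_le.1 ⟨a 0, b 0, hfirst.ge hd⟩
  have hn' : (1 : ℝ) ≤ n / 2 := by rw [le_div_iff₀ two_pos]; exact_mod_cast hn
  have hT : ∀ s ∈ S, 2 * hDistOn (Set.Ici d) s a ≤ d := fun s hs =>
    two_mul_hDistOn_Ici_le hfirst (hmax.1 a ha s hs) (hmax.1 b hb s hs)
  have hdm : d ≤ 2 * mp := hmp ▸ le_two_mul_max_hammingDist hfirst p
  have hmd : mp ≤ d := by
    simpa only [hmp, Fintype.card_fin] using
      max_le (hammingDist_le_card_fintype (x := fun i : Fin d => a i) (y := p))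
        (hammingDist_le_card_fintype (x := fun i : Fin d => b i) (y := p))
  have hlevel : ∀ k ∈ Finset.range (d - mp + 1),
      CardLE (Sell n S ℓ ∩ anchoredSphere (Set.Ici d) a (replacePrefix p a) k)
        (Sun q (2 * L) * ((n : ℝ) / 2) ^ (d - mp) * (2 * d - mp).choose (d - mp)) := by
    intro k hk
    have hkm : k ≤ d - mp := Finset.mem_range_succ_iff.1 hk
    refine (cardLE_Sell_inter_anchoredSphere_choose hn hmax hball hT hq hdq
      (forcesSunflower_sun q (2 * L)) (by omega) _).trans_le ?_
    rw [show 2 * d - mp = d + (d - mp) by omega, ← Nat.choose_symm_add, ← Nat.choose_symm_add]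
    gcongr
  have hcard := CardLE.of_subset_biUnion hlevel
    (hmp ▸ setOf_prefix_subset_biUnion hmax.1 (Set.sep_subset S _) ha hb hfirst p)
  refine ⟨hcard.finite, hcard.ncard_le.trans ?_⟩
  rw [Finset.card_range, mul_assoc (d : ℝ), mul_assoc (d : ℝ)]
  gcongr
  omega

theorem stmt14 (n d L : ℕ) (hn : 2 ≤ n) (hd : 1 ≤ d) (hL : 2 * L ≤ d)
    (S : Set (ℕ → Fin n)) (hmax : IsDMaximal n d S) (hball : ¬ ContainsBall n S (L + 1))
    (ℓ : ℕ)
    (a b : ℕ → Fin n) (ha : a ∈ S) (hb : b ∈ S) (hab : hDist n a b = (d : ℕ∞))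
    (hfirst : {i | a i ≠ b i} = Set.Iio d)
    (p : Fin d → Fin n)
    (mp : ℕ)
    (hmp : mp = max (hammingDist (fun i : Fin d => a i) p)
                    (hammingDist (fun i : Fin d => b i) p)) :
    {z ∈ Sell n S ℓ | ∀ i : Fin d, z i = p i}.Finite ∧
      (({z ∈ Sell n S ℓ | ∀ i : Fin d, z i = p i}.ncard : ℝ) ≤
        (d : ℝ) * (Sun (d + n) (2 * L) : ℝ) * ((n : ℝ) / 2) ^ (d - mp) *
          ((2 * d - mp).choose (d - mp) : ℝ)) := by
  exact stmt14_general n d L hd S hmax hball ℓ a b ha hb hfirst p mp hmp (d + n)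
    (by omega) (by omega)
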